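/- arXiv:2506.11509 — 7 statements merged into one kernel-verified Lean document; each statement's English description precedes it below -/
import Mathlib

section
/- Let (Ω, 𝔉, P) be a probability space, 𝔊 ⊆ 𝔉 a sub-σ-algebra, and ε a real-valued random variable that has full conditional support given 𝔊. Then for every 𝔊-measurable real-valued random variable W and every nonempty open interval I ⊆ ℝ, one has P(ε − W ∈ I) > 0. -/
open MeasureTheory Set

/-- A real-valued random variable `ε` has *full conditional support* given a
sub-σ-algebra `m` if for every `m`-measurable set `A` of positive probability and
every nonempty open interval `(a, b)`, the event `A ∩ {ε ∈ (a, b)}` has positive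
probability. -/
def FullCondSupport {Ω : Type*} {mΩ : MeasurableSpace Ω} (P : Measure Ω)
    (m : MeasurableSpace Ω) (ε : Ω → ℝ) : Prop :=
  ∀ A : Set Ω, MeasurableSet[m] A → 0 < P A →
    ∀ a b : ℝ, a < b → 0 < P (A ∩ {ω | ε ω ∈ Set.Ioo a b})

/-- If `ε` has full conditional support given the sub-σ-algebra `m` and `W` is
`m`-measurable, then `ε − W` lands in any nonempty open interval with positive
probability. -/
theorem stmt_0 {Ω : Type*} [inst : MeasurableSpace Ω] (P : Measure Ω)
    [IsProbabilityMeasure P]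
    (m : MeasurableSpace Ω) (hm : m ≤ inst)
    (ε : Ω → ℝ) (hε : FullCondSupport P m ε)
    (W : Ω → ℝ) (hW : Measurable[m] W)
    (a b : ℝ) (hab : a < b) :
    0 < P {ω | ε ω - W ω ∈ Set.Ioo a b} := by
  obtain ⟨δ, hδ⟩ : ∃ δ : ℝ, δ = (b - a) / 4 := ⟨_, rfl⟩
  have hδ0 : 0 < δ := by linarith
  have hex : ∃ q : ℚ, 0 < P (W ⁻¹' Set.Ioo ((q : ℝ) - δ) (q + δ)) := by
    by_contra hcon
    have h0 : ∀ q : ℚ, P (W ⁻¹' Set.Ioo ((q : ℝ) - δ) (q + δ)) = 0 := fun q =>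
      le_antisymm (not_lt.mp fun h => hcon ⟨q, h⟩) zero_le
    have hU : P (⋃ q : ℚ, W ⁻¹' Set.Ioo ((q : ℝ) - δ) (q + δ)) = 0 :=
      measure_iUnion_null h0
    have hUniv : (⋃ q : ℚ, W ⁻¹' Set.Ioo ((q : ℝ) - δ) (q + δ)) = Set.univ := by
      refine Set.eq_univ_of_forall fun ω => ?_
      obtain ⟨q, h1, h2⟩ := exists_rat_btwn (show W ω - δ < W ω + δ by linarith)
      exact Set.mem_iUnion.mpr ⟨q, by linarith, by linarith⟩
    rw [hUniv, measure_univ] at hU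
    exact one_ne_zero hU
  obtain ⟨q, hq⟩ := hex
  refine (hε _ (hW measurableSet_Ioo) hq (a + q + δ) (b + q - δ) (by linarith)).trans_le
    (measure_mono ?_)
  rintro ω ⟨⟨h1, h2⟩, h3, h4⟩
  exact ⟨by linarith, by linarith⟩
end

section
/- In the AR identification setup, let δ = (δ₁, δ₂, …, δ_{p+1}) ∈ ℝ^{p+1} be such that (δ₂, …, δ_{p+1}) ≠ (0, …, 0). Then P(δ₁ + Σ_{j=1}^p δ_{j+1} y_{t−j} ≥ 0) < 1 and P(δ₁ + Σ_{j=1}^p δ_{j+1} y_{t−j} ≤ 0) < 1. -/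
open MeasureTheory Set

/-- A predictable variable plus a nonzero multiple of a full-support shock is negative with
positive probability. -/
theorem pos_neg_event {Ω : Type*} [inst : MeasurableSpace Ω] (P : Measure Ω)
    [IsProbabilityMeasure P] (m : MeasurableSpace Ω) (V e : Ω → ℝ)
    (hV : Measurable[m] V) (he : FullCondSupport P m e) (c : ℝ) (hc : c ≠ 0) :
    0 < P {ω | V ω + c * e ω < 0} := by
  obtain ⟨n, hn⟩ : ∃ n : ℕ, 0 < P {ω | V ω < n} := by
    by_contra hcon
    push Not at hcon
    have h0 : P (⋃ n : ℕ, {ω | V ω < n}) = 0 :=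
      measure_iUnion_null fun n => le_antisymm (hcon n) zero_le
    have hU : (⋃ n : ℕ, {ω | V ω < n}) = univ := by
      ext ω
      simpa using exists_nat_gt (V ω)
    rw [hU, measure_univ] at h0
    exact one_ne_zero h0
  have hA : MeasurableSet[m] {ω | V ω < n} := hV measurableSet_Iio
  rcases lt_or_gt_of_ne hc with h | h
  · refine lt_of_lt_of_le (he _ hA hn (-n / c) (-n / c + 1) (by linarith)) (measure_mono ?_)
    rintro ω ⟨h1, h2⟩
    have h3 : -n / c < e ω := h2.1
    rw [div_lt_iff_of_neg h] at h3
    have h4 : V ω < n := h1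
    change V ω + c * e ω < 0
    linarith
  · refine lt_of_lt_of_le (he _ hA hn (-n / c - 1) (-n / c) (by linarith)) (measure_mono ?_)
    rintro ω ⟨h1, h2⟩
    have h3 : e ω < -n / c := h2.2
    rw [lt_div_iff₀ h] at h3
    have h4 : V ω < n := h1
    change V ω + c * e ω < 0
    linarith

theorem stmt_2_aux {Ω : Type*} [inst : MeasurableSpace Ω] (P : Measure Ω)
    [IsProbabilityMeasure P]
    (p : ℕ) (hp : 1 ≤ p) (t : ℤ)
    (𝔊 : ℤ → MeasurableSpace Ω)
    (h𝔊mono : Monotone 𝔊) (h𝔊le : ∀ s : ℤ, 𝔊 s ≤ inst)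
    (y W ε : ℤ → Ω → ℝ)
    (hdecomp : ∀ s : ℤ, t - p ≤ s → s ≤ t - 1 → ∀ ω, y s ω = W s ω + ε s ω)
    (hy : ∀ s : ℤ, t - p ≤ s → s ≤ t - 1 → Measurable[𝔊 s] (y s))
    (hW : ∀ s : ℤ, t - p ≤ s → s ≤ t - 1 → Measurable[𝔊 (s - 1)] (W s))
    (hε : ∀ s : ℤ, t - p ≤ s → s ≤ t - 1 → FullCondSupport P (𝔊 (s - 1)) (ε s))
    (δ₁ : ℝ) (δ : Fin p → ℝ) (hδ : δ ≠ 0) :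
    P {ω | 0 ≤ δ₁ + ∑ j : Fin p, δ j * y (t - 1 - (j : ℕ)) ω} < 1 := by
  classical
  obtain ⟨j₀, hj₀, hmin⟩ : ∃ j₀ : Fin p, δ j₀ ≠ 0 ∧ ∀ j < j₀, δ j = 0 := by
    have hne : (Finset.univ.filter (fun j => δ j ≠ 0)).Nonempty := by
      obtain ⟨j, hj⟩ := Function.ne_iff.mp hδ
      exact ⟨j, by simpa using hj⟩
    refine ⟨(Finset.univ.filter (fun j => δ j ≠ 0)).min' hne, ?_, ?_⟩
    · simpa using Finset.min'_mem _ hne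
    · intro j hj
      by_contra h
      exact absurd (Finset.min'_le _ j (by simpa using h)) (not_le.mpr hj)
  have hrange : ∀ j : Fin p, t - p ≤ t - 1 - ((j : ℕ) : ℤ) ∧ t - 1 - ((j : ℕ) : ℤ) ≤ t - 1 := by
    intro j
    have := j.2
    omega
  set s : ℤ := t - 1 - ((j₀ : ℕ) : ℤ) with hs
  obtain ⟨hs1, hs2⟩ := hrange j₀
  let V : Ω → ℝ := fun ω => δ₁ + δ j₀ * W s ω +
    ∑ j ∈ Finset.univ.filter (fun j => j₀ < j), δ j * y (t - 1 - ((j : ℕ) : ℤ)) ω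
  have hV : Measurable[𝔊 (s - 1)] V := by
    refine Measurable.add (Measurable.add measurable_const
      (Measurable.const_mul (hW s hs1 hs2) _)) ?_
    refine Finset.measurable_fun_sum _ ?_
    intro j hj
    have hj' : j₀ < j := by simpa using hj
    have hj'' : (j₀ : ℕ) < (j : ℕ) := hj'
    refine Measurable.const_mul ?_ _
    exact (hy _ (hrange j).1 (hrange j).2).mono (h𝔊mono (by omega)) le_rfl
  have hY : ∀ ω, δ₁ + ∑ j : Fin p, δ j * y (t - 1 - ((j : ℕ) : ℤ)) ω = V ω + δ j₀ * ε s ω := by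
    intro ω
    have h1 : ∑ j : Fin p, δ j * y (t - 1 - ((j : ℕ) : ℤ)) ω
        = δ j₀ * y s ω +
          ∑ j ∈ Finset.univ.filter (fun j => j₀ < j), δ j * y (t - 1 - ((j : ℕ) : ℤ)) ω := by
      rw [← Finset.add_sum_erase _ _ (Finset.mem_univ j₀)]
      congr 1
      symm
      apply Finset.sum_subset
      · intro j hj
        have hj' : j₀ < j := by simpa using hj
        simpa using hj'.ne'
      · intro j hj hj2
        have h3 : j ≠ j₀ := by simpa using hj
        have h4 : j ≤ j₀ := by simpa using hj2
        rw [hmin j (lt_of_le_of_ne h4 h3), zero_mul]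
    rw [h1, hdecomp s hs1 hs2 ω]
    simp only [V]
    ring
  have hpos := pos_neg_event P (𝔊 (s - 1)) V (ε s) hV (hε s hs1 hs2) (δ j₀) hj₀
  have hYm : Measurable (fun ω => δ₁ + ∑ j : Fin p, δ j * y (t - 1 - ((j : ℕ) : ℤ)) ω) := by
    refine measurable_const.add (Finset.measurable_fun_sum _ ?_)
    intro j _
    exact ((hy _ (hrange j).1 (hrange j).2).mono (h𝔊le _) le_rfl).const_mul _
  have hms : MeasurableSet {ω | 0 ≤ δ₁ + ∑ j : Fin p, δ j * y (t - 1 - ((j : ℕ) : ℤ)) ω} :=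
    measurableSet_le measurable_const hYm
  refine lt_of_le_of_ne prob_le_one ?_
  intro h
  have h0 := (prob_compl_eq_zero_iff hms).mpr h
  refine hpos.ne' (measure_mono_null ?_ h0)
  intro ω hω
  simp only [mem_compl_iff, mem_setOf_eq, not_le] at hω ⊢
  rw [hY ω]
  exact hω

/-- AR identification setup: in the filtration `𝔊`, each `y s = W s + ε s`
(`s = t-p, …, t-1`) with `y s` being `𝔊 s`-measurable, `W s` being
`𝔊 (s-1)`-measurable, and `ε s` having full conditional support given `𝔊 (s-1)`.
If some lag coefficient `δ j` is nonzero, then the linear combination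
`δ₁ + ∑_{j=1}^p δ_{j+1} y_{t-j}` is neither a.s. nonnegative nor a.s. nonpositive. -/
theorem stmt_2 {Ω : Type*} [inst : MeasurableSpace Ω] (P : Measure Ω)
    [IsProbabilityMeasure P]
    (p : ℕ) (hp : 1 ≤ p) (t : ℤ)
    (𝔊 : ℤ → MeasurableSpace Ω)
    (h𝔊mono : Monotone 𝔊) (h𝔊le : ∀ s : ℤ, 𝔊 s ≤ inst)
    (y W ε : ℤ → Ω → ℝ)
    (hdecomp : ∀ s : ℤ, t - p ≤ s → s ≤ t - 1 → ∀ ω, y s ω = W s ω + ε s ω)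
    (hy : ∀ s : ℤ, t - p ≤ s → s ≤ t - 1 → Measurable[𝔊 s] (y s))
    (hW : ∀ s : ℤ, t - p ≤ s → s ≤ t - 1 → Measurable[𝔊 (s - 1)] (W s))
    (hε : ∀ s : ℤ, t - p ≤ s → s ≤ t - 1 → FullCondSupport P (𝔊 (s - 1)) (ε s))
    (δ₁ : ℝ) (δ : Fin p → ℝ) (hδ : δ ≠ 0) :
    P {ω | 0 ≤ δ₁ + ∑ j : Fin p, δ j * y (t - 1 - (j : ℕ)) ω} < 1 ∧
    P {ω | δ₁ + ∑ j : Fin p, δ j * y (t - 1 - (j : ℕ)) ω ≤ 0} < 1 := by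
  refine ⟨stmt_2_aux P p hp t 𝔊 h𝔊mono h𝔊le y W ε hdecomp hy hW hε δ₁ δ hδ, ?_⟩
  have h := stmt_2_aux P p hp t 𝔊 h𝔊mono h𝔊le y W ε hdecomp hy hW hε (-δ₁) (-δ)
    (neg_ne_zero.mpr hδ)
  convert h using 3
  ext ω
  simp only [mem_setOf_eq, Pi.neg_apply, neg_mul, Finset.sum_neg_distrib]
  constructor <;> intro h <;> linarith
end

section
/- In the AR identification setup, if δ = (δ₁, δ₂, …, δ_{p+1}) ∈ ℝ^{p+1} satisfies P(δ₁ + Σ_{j=1}^p δ_{j+1} y_{t−j} = 0) = 1, then δ = 0. Equivalently, the random vector Z_{t−1} = (1, y_{t−1}, …, y_{t−p}) is not almost surely contained in any proper linear subspace of ℝ^{p+1}. -/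
open MeasureTheory Set

/-- A variable with full conditional support given `m` is not a.s. equal to an
`m`-measurable one. -/
lemma FullCondSupport.not_ae_eq {Ω : Type*} {mΩ : MeasurableSpace Ω} (P : Measure Ω)
    [IsProbabilityMeasure P] (m : MeasurableSpace Ω) (ε X : Ω → ℝ)
    (h : FullCondSupport P m ε) (hX : Measurable[m] X) (hae : ∀ᵐ ω ∂P, ε ω = X ω) : False := by
  have hex : ∃ n : ℕ, 0 < P {ω | X ω ≤ n} := by
    by_contra! hcon
    have h0 : P (⋃ n : ℕ, {ω | X ω ≤ n}) = 0 :=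
      measure_iUnion_null fun n => le_antisymm (hcon n) bot_le
    have hU : (⋃ n : ℕ, {ω | X ω ≤ n}) = Set.univ := by
      ext ω
      simpa using exists_nat_ge (X ω)
    rw [hU, measure_univ] at h0
    exact one_ne_zero h0
  obtain ⟨n, hn⟩ := hex
  have hm : MeasurableSet[m] {ω | X ω ≤ n} := hX measurableSet_Iic
  have hpos := h _ hm hn n (n + 1) (by linarith)
  refine hpos.ne' (measure_mono_null ?_ (ae_iff.mp hae))
  rintro ω ⟨h1, h2⟩
  simp only [Set.mem_setOf_eq, Set.mem_Ioo] at h1 h2 ⊢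
  intro he
  linarith [h2.1]

/-- AR identification setup: in the filtration `𝔊`, each `y s = W s + ε s`
(`s = t-p, …, t-1`) with `y s` being `𝔊 s`-measurable, `W s` being
`𝔊 (s-1)`-measurable, and `ε s` having full conditional support given `𝔊 (s-1)`.
If `δ₁ + ∑_{j=1}^p δ_{j+1} y_{t-j} = 0` almost surely, then `δ = 0`; i.e., the
random vector `Z_{t-1} = (1, y_{t-1}, …, y_{t-p})` is not a.s. contained in any
proper linear subspace of `ℝ^{p+1}`. -/
theorem stmt_3 {Ω : Type*} [inst : MeasurableSpace Ω] (P : Measure Ω)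
    [IsProbabilityMeasure P]
    (p : ℕ) (hp : 1 ≤ p) (t : ℤ)
    (𝔊 : ℤ → MeasurableSpace Ω)
    (h𝔊mono : Monotone 𝔊) (h𝔊le : ∀ s : ℤ, 𝔊 s ≤ inst)
    (y W ε : ℤ → Ω → ℝ)
    (hdecomp : ∀ s : ℤ, t - p ≤ s → s ≤ t - 1 → ∀ ω, y s ω = W s ω + ε s ω)
    (hy : ∀ s : ℤ, t - p ≤ s → s ≤ t - 1 → Measurable[𝔊 s] (y s))
    (hW : ∀ s : ℤ, t - p ≤ s → s ≤ t - 1 → Measurable[𝔊 (s - 1)] (W s))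
    (hε : ∀ s : ℤ, t - p ≤ s → s ≤ t - 1 → FullCondSupport P (𝔊 (s - 1)) (ε s))
    (δ₁ : ℝ) (δ : Fin p → ℝ)
    (hzero : P {ω | δ₁ + ∑ j : Fin p, δ j * y (t - 1 - (j : ℕ)) ω = 0} = 1) :
    δ₁ = 0 ∧ δ = 0 := by
  have hyj : ∀ j : Fin p, t - p ≤ t - 1 - (j : ℕ) ∧ t - 1 - (j : ℕ) ≤ t - 1 := by
    intro j
    have := j.2
    omega
  have hym : ∀ j : Fin p, Measurable (y (t - 1 - (j : ℕ))) := fun j =>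
    (hy _ (hyj j).1 (hyj j).2).mono (h𝔊le _) le_rfl
  have hmeas : Measurable fun ω => δ₁ + ∑ j : Fin p, δ j * y (t - 1 - (j : ℕ)) ω :=
    measurable_const.add (Finset.measurable_sum _ fun j _ => (hym j).const_mul _)
  have hae : ∀ᵐ ω ∂P, δ₁ + ∑ j : Fin p, δ j * y (t - 1 - (j : ℕ)) ω = 0 := by
    rw [ae_iff]
    exact (prob_compl_eq_zero_iff (hmeas (measurableSet_singleton 0))).mpr hzero
  have key : ∀ n : ℕ, ∀ hn : n < p, δ ⟨n, hn⟩ = 0 := by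
    intro n
    induction n using Nat.strong_induction_on with
    | _ n ih =>
      intro hn
      by_contra hne
      set j : Fin p := ⟨n, hn⟩ with hj
      have hjj := hyj j
      set s : ℤ := t - 1 - (j : ℕ) with hs
      let X : Ω → ℝ := fun ω =>
        -(δ₁ + ∑ i ∈ Finset.univ.filter (fun i => j < i),
          δ i * y (t - 1 - (i : ℕ)) ω) / δ j - W s ω
      have hX : Measurable[𝔊 (s - 1)] X := by
        refine Measurable.sub (Measurable.div_const (Measurable.neg
          (measurable_const.add (Finset.measurable_sum _ fun i hi => ?_))) _) (hW s hjj.1 hjj.2)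
        have hi' : (j : ℕ) < (i : ℕ) := (Finset.mem_filter.mp hi).2
        have : Measurable[𝔊 (s - 1)] (y (t - 1 - (i : ℕ))) :=
          (hy _ (hyj i).1 (hyj i).2).mono (h𝔊mono (by omega)) le_rfl
        exact this.const_mul _
      refine FullCondSupport.not_ae_eq P _ (ε s) X (hε s hjj.1 hjj.2) hX ?_
      filter_upwards [hae] with ω hω
      have hsplit : ∑ i : Fin p, δ i * y (t - 1 - (i : ℕ)) ω
          = δ j * y s ω + ∑ i ∈ Finset.univ.filter (fun i => j < i),
            δ i * y (t - 1 - (i : ℕ)) ω := by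
        rw [← Finset.add_sum_erase _ _ (Finset.mem_univ j)]
        congr 1
        symm
        apply Finset.sum_subset
        · intro i hi
          simp only [Finset.mem_filter, Finset.mem_univ, true_and] at hi
          simp [hi.ne']
        · intro i hi hi2
          simp only [Finset.mem_filter, Finset.mem_univ, true_and, not_lt] at hi2
          have hlt : i < j := lt_of_le_of_ne hi2 (Finset.ne_of_mem_erase hi)
          have : δ i = 0 := ih i hlt i.2
          rw [this, zero_mul]
      rw [hsplit, hdecomp s hjj.1 hjj.2 ω] at hω
      simp only [X]
      rw [eq_sub_iff_add_eq, eq_div_iff hne]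
      linarith
  have hδ : δ = 0 := funext fun j => key j j.2
  refine ⟨?_, hδ⟩
  obtain ⟨ω, hω⟩ := hae.exists
  simpa [hδ] using hω
end

section
/- In the AR identification setup, let Q be a 𝔊_{t−1}-measurable real-valued random variable such that (a) P(Q ≥ 0) = 1 or P(Q ≤ 0) = 1, and (b) Q is not almost surely equal to any constant. Then for every δ = (δ₁, δ₂, …, δ_{p+1}) ∈ ℝ^{p+1}, one has P(δ₁ + Σ_{j=1}^p δ_{j+1} y_{t−j} = Q) < 1. -/
open MeasureTheory Set

/-- A shifted, scaled variable with full conditional support cannot be nonnegative a.s. -/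
theorem not_ae_nonneg_aux {Ω : Type*} {mΩ : MeasurableSpace Ω} (P : Measure Ω)
    [IsProbabilityMeasure P] (m : MeasurableSpace Ω) (ε V : Ω → ℝ)
    (hε : FullCondSupport P m ε) (hV : Measurable[m] V) (d : ℝ) (hd : d ≠ 0)
    (h : ∀ᵐ ω ∂P, 0 ≤ d * ε ω + V ω) : False := by
  obtain ⟨K, hK⟩ : ∃ K : ℕ, 0 < P {ω | V ω ≤ K} := by
    by_contra hcon
    push Not at hcon
    have h0 : P (⋃ K : ℕ, {ω | V ω ≤ K}) = 0 :=
      measure_iUnion_null (fun K => le_antisymm (hcon K) (zero_le))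
    have h1 : (⋃ K : ℕ, {ω | V ω ≤ K}) = Set.univ := by
      ext ω
      simpa using exists_nat_ge (V ω)
    rw [h1] at h0
    simp at h0
  have hA : MeasurableSet[m] {ω | V ω ≤ K} := hV measurableSet_Iic
  have key : ∃ a b : ℝ, a < b ∧ ∀ x ∈ Set.Ioo a b, d * x < -(K : ℝ) := by
    have e : d * (-(K : ℝ) / d) = -(K : ℝ) := by field_simp
    rcases lt_or_gt_of_ne hd with hneg | hpos
    · refine ⟨-(K : ℝ) / d, -(K : ℝ) / d + 1, by linarith, fun x hx => ?_⟩
      have := mul_lt_mul_of_neg_left hx.1 hneg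
      linarith
    · refine ⟨-(K : ℝ) / d - 1, -(K : ℝ) / d, by linarith, fun x hx => ?_⟩
      have := mul_lt_mul_of_pos_left hx.2 hpos
      linarith
  obtain ⟨a, b, hab, hx⟩ := key
  have hpos := hε _ hA hK a b hab
  have hz : P ({ω | V ω ≤ K} ∩ {ω | ε ω ∈ Set.Ioo a b}) = 0 := by
    refine measure_mono_null ?_ (ae_iff.mp h)
    rintro ω ⟨h1, h2⟩
    have h3 := hx _ h2
    simp only [Set.mem_setOf_eq] at h1 ⊢
    linarith
  exact hpos.ne' hz

/-- AR identification setup: in the filtration `𝔊`, each `y s = W s + ε s`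
(`s = t-p, …, t-1`) with `y s` being `𝔊 s`-measurable, `W s` being
`𝔊 (s-1)`-measurable, and `ε s` having full conditional support given `𝔊 (s-1)`.
If `Q` is `𝔊 (t-1)`-measurable, one-signed almost surely, and not a.s. constant,
then no linear combination `δ₁ + ∑_{j=1}^p δ_{j+1} y_{t-j}` can equal `Q` a.s. -/
theorem stmt_4 {Ω : Type*} [inst : MeasurableSpace Ω] (P : Measure Ω)
    [IsProbabilityMeasure P]
    (p : ℕ) (hp : 1 ≤ p) (t : ℤ)
    (𝔊 : ℤ → MeasurableSpace Ω)
    (h𝔊mono : Monotone 𝔊) (h𝔊le : ∀ s : ℤ, 𝔊 s ≤ inst)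
    (y W ε : ℤ → Ω → ℝ)
    (hdecomp : ∀ s : ℤ, t - p ≤ s → s ≤ t - 1 → ∀ ω, y s ω = W s ω + ε s ω)
    (hy : ∀ s : ℤ, t - p ≤ s → s ≤ t - 1 → Measurable[𝔊 s] (y s))
    (hW : ∀ s : ℤ, t - p ≤ s → s ≤ t - 1 → Measurable[𝔊 (s - 1)] (W s))
    (hε : ∀ s : ℤ, t - p ≤ s → s ≤ t - 1 → FullCondSupport P (𝔊 (s - 1)) (ε s))
    (Q : Ω → ℝ) (hQmeas : Measurable[𝔊 (t - 1)] Q)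
    (hQsign : P {ω | 0 ≤ Q ω} = 1 ∨ P {ω | Q ω ≤ 0} = 1)
    (hQnondeg : ∀ c : ℝ, P {ω | Q ω = c} < 1) :
    ∀ (δ₁ : ℝ) (δ : Fin p → ℝ),
      P {ω | δ₁ + ∑ j : Fin p, δ j * y (t - 1 - (j : ℕ)) ω = Q ω} < 1 := by
  intro δ₁ δ
  refine lt_of_le_of_ne prob_le_one fun h1 => ?_
  have hymeas : ∀ j : Fin p, Measurable (y (t - 1 - (j : ℕ))) := fun j => by
    have := j.2
    exact (hy _ (by omega) (by omega)).mono (h𝔊le _) le_rfl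
  have hQm : Measurable Q := hQmeas.mono (h𝔊le _) le_rfl
  have hSm : Measurable (fun ω => δ₁ + ∑ j : Fin p, δ j * y (t - 1 - (j : ℕ)) ω) :=
    measurable_const.add (Finset.measurable_sum _ fun j _ => (hymeas j).const_mul _)
  have hae : ∀ᵐ ω ∂P, δ₁ + ∑ j : Fin p, δ j * y (t - 1 - (j : ℕ)) ω = Q ω :=
    (mem_ae_iff_prob_eq_one (measurableSet_eq_fun hSm hQm)).mpr h1
  by_cases hall : ∀ j, δ j = 0
  · refine (hQnondeg δ₁).ne ?_
    refine (mem_ae_iff_prob_eq_one (measurableSet_eq_fun hQm measurable_const)).mp ?_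
    filter_upwards [hae] with ω hω
    simp only [hall, zero_mul, Finset.sum_const_zero, add_zero] at hω
    exact hω.symm
  · push Not at hall
    obtain ⟨j, hj, hmin⟩ := wellFounded_lt.has_min {j : Fin p | δ j ≠ 0} hall
    have hjp := j.2
    have hs1 : t - p ≤ t - 1 - (j : ℕ) := by omega
    have hs2 : t - 1 - (j : ℕ) ≤ t - 1 := by omega
    set V : Ω → ℝ := fun ω => δ₁ + δ j * W (t - 1 - (j : ℕ)) ω +
      ∑ i ∈ Finset.univ.erase j, δ i * y (t - 1 - (i : ℕ)) ω with hVdef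
    have hV : Measurable[𝔊 (t - 1 - (j : ℕ) - 1)] V := by
      refine Measurable.add (measurable_const.add ((hW _ hs1 hs2).const_mul _)) ?_
      refine Finset.measurable_sum _ fun i hi => ?_
      have hij := Finset.ne_of_mem_erase hi
      rcases lt_or_gt_of_ne hij with hlt | hgt
      · have h0 : δ i = 0 := by
          by_contra hne
          exact hmin i hne hlt
        simp only [h0, zero_mul]
        exact measurable_const
      · have hip := i.2
        have hgt' : (j : ℕ) < i := hgt
        exact ((hy _ (by omega) (by omega)).mono (h𝔊mono (by omega)) le_rfl).const_mul _
    have hrepr : ∀ᵐ ω ∂P, Q ω = δ j * ε (t - 1 - (j : ℕ)) ω + V ω := by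
      filter_upwards [hae] with ω hω
      rw [← hω, ← Finset.add_sum_erase _ _ (Finset.mem_univ j), hdecomp _ hs1 hs2 ω, hVdef]
      ring
    rcases hQsign with hQ | hQ
    · have hQ' : ∀ᵐ ω ∂P, 0 ≤ Q ω :=
        (mem_ae_iff_prob_eq_one (measurableSet_le measurable_const hQm)).mpr hQ
      refine not_ae_nonneg_aux P _ _ V (hε _ hs1 hs2) hV (δ j) hj ?_
      filter_upwards [hQ', hrepr] with ω h2 h3
      rwa [← h3]
    · have hQ' : ∀ᵐ ω ∂P, Q ω ≤ 0 :=
        (mem_ae_iff_prob_eq_one (measurableSet_le hQm measurable_const)).mpr hQ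
      refine not_ae_nonneg_aux P _ _ (fun ω => - V ω) (hε _ hs1 hs2) hV.neg (-δ j)
        (neg_ne_zero.mpr hj) ?_
      filter_upwards [hQ', hrepr] with ω h2 h3
      linarith
end

section
/- Let n ≥ 1, let J be a compact topological space, and let g : ℝⁿ × J → ℝⁿ be continuous such that for every unit vector φ ∈ ℝⁿ (with |φ| = 1) and every τ ∈ J, the map r ↦ ⟨φ, g(rφ, τ)⟩ is strictly increasing on ℝ and attains both a strictly negative value and a strictly positive value. Then the set {x ∈ ℝⁿ : g(x, τ) = 0 for some τ ∈ J} is bounded. -/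
open scoped RealInnerProductSpace

/-- If `g : ℝⁿ × J → ℝⁿ` is continuous on a compact space `J`, and for each unit
vector `φ` and each `τ ∈ J` the scalarized map `r ↦ ⟪φ, g (rφ, τ)⟫` is strictly
increasing and attains both a negative and a positive value, then the set of
zeros `{x : g (x, τ) = 0 for some τ ∈ J}` is bounded. -/
theorem stmt_8 (n : ℕ) (hn : 1 ≤ n)
    {J : Type*} [TopologicalSpace J] [CompactSpace J]
    (g : EuclideanSpace ℝ (Fin n) × J → EuclideanSpace ℝ (Fin n))
    (hcont : Continuous g)
    (hmono : ∀ (φ : EuclideanSpace ℝ (Fin n)), ‖φ‖ = 1 → ∀ τ : J,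
      StrictMono (fun r : ℝ => ⟪φ, g (r • φ, τ)⟫))
    (hsign : ∀ (φ : EuclideanSpace ℝ (Fin n)), ‖φ‖ = 1 → ∀ τ : J,
      (∃ rneg : ℝ, ⟪φ, g (rneg • φ, τ)⟫ < 0) ∧
      (∃ rpos : ℝ, 0 < ⟪φ, g (rpos • φ, τ)⟫)) :
    Bornology.IsBounded {x : EuclideanSpace ℝ (Fin n) | ∃ τ : J, g (x, τ) = 0} := by
  have hK : IsCompact (Metric.sphere (0 : EuclideanSpace ℝ (Fin n)) 1 ×ˢ (Set.univ : Set J)) :=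
    (isCompact_sphere _ _).prod isCompact_univ
  obtain ⟨t, ht⟩ := hK.elim_finite_subcover
    (fun r : ℝ => {q : EuclideanSpace ℝ (Fin n) × J | 0 < ⟪q.1, g (r • q.1, q.2)⟫})
    (fun r => isOpen_lt continuous_const
      (continuous_fst.inner (hcont.comp
        ((continuous_fst.const_smul r).prodMk continuous_snd))))
    (by
      rintro ⟨φ, τ⟩ ⟨hφ, -⟩
      obtain ⟨r, hr⟩ := (hsign φ (by simpa using hφ) τ).2
      exact Set.mem_iUnion.2 ⟨r, hr⟩)
  obtain ⟨M, hM⟩ := t.exists_le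
  refine isBounded_iff_forall_norm_le.2 ⟨max M 0, ?_⟩
  rintro x ⟨τ, hx⟩
  by_cases h0 : x = 0
  · simp [h0]
  have hn0 : ‖x‖ ≠ 0 := norm_ne_zero_iff.2 h0
  have hφ : ‖(‖x‖⁻¹ • x)‖ = 1 := by
    rw [norm_smul, norm_inv, norm_norm, inv_mul_cancel₀ hn0]
  have hmem := ht (show ((‖x‖⁻¹ • x, τ) : EuclideanSpace ℝ (Fin n) × J) ∈ _ from
    ⟨by simpa using hφ, Set.mem_univ _⟩)
  simp only [Set.mem_iUnion] at hmem
  obtain ⟨r, hrt, hr⟩ := hmem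
  have hz : ⟪‖x‖⁻¹ • x, g (‖x‖ • (‖x‖⁻¹ • x), τ)⟫ = 0 := by
    rw [smul_inv_smul₀ hn0, hx, inner_zero_right]
  have hlt : ‖x‖ < r := by
    apply (hmono _ hφ τ).lt_iff_lt.1
    change ⟪‖x‖⁻¹ • x, g (‖x‖ • (‖x‖⁻¹ • x), τ)⟫ < _
    rw [hz]
    exact hr
  exact (hlt.le.trans (hM r hrt)).trans (le_max_left _ _)
end

section
/- Let I ⊆ ℝ be an open interval, n ≥ 1, and let g : ℝⁿ × I → ℝⁿ be continuously differentiable such that: (a) for every (x, τ) ∈ ℝⁿ × I the partial derivative Dₓg(x, τ) is positive definite, i.e. ⟨Dₓg(x, τ)u, u⟩ > 0 for all u ≠ 0; (b) for every compact subinterval J ⊆ I the set {x ∈ ℝⁿ : g(x, τ) = 0 for some τ ∈ J} is bounded; and (c) g(x₀, τ₀) = 0 for some (x₀, τ₀) ∈ ℝⁿ × I. Then for every τ ∈ I there exists a unique δ(τ) ∈ ℝⁿ with g(δ(τ), τ) = 0, and the map τ ↦ δ(τ) is continuously differentiable on I. -/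
open scoped RealInnerProductSpace
open Set

/-- Global continuation of zeros: if `g : ℝⁿ × I → ℝⁿ` is `C¹` on `ℝⁿ × I` for an
open interval `I ⊆ ℝ`, its partial derivative in `x` is everywhere positive
definite, the zero set over every compact subinterval of `I` is bounded, and `g`
has a zero at some `(x₀, τ₀)`, then for every `τ ∈ I` there is a unique zero
`δ τ` of `g (·, τ)`, and `τ ↦ δ τ` is continuously differentiable on `I`. -/
theorem stmt_9 (n : ℕ) (hn : 1 ≤ n)
    (I : Set ℝ) (hIopen : IsOpen I) (hIconn : I.OrdConnected)
    (g : EuclideanSpace ℝ (Fin n) × ℝ → EuclideanSpace ℝ (Fin n))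
    (hg : ContDiffOn ℝ 1 g (univ ×ˢ I))
    (hpos : ∀ (x : EuclideanSpace ℝ (Fin n)), ∀ τ ∈ I,
      ∀ u : EuclideanSpace ℝ (Fin n), u ≠ 0 →
        0 < ⟪fderiv ℝ (fun x' => g (x', τ)) x u, u⟫)
    (hbdd : ∀ a b : ℝ, Icc a b ⊆ I →
      Bornology.IsBounded
        {x : EuclideanSpace ℝ (Fin n) | ∃ τ ∈ Icc a b, g (x, τ) = 0})
    (hzero : ∃ x₀ : EuclideanSpace ℝ (Fin n), ∃ τ₀ ∈ I, g (x₀, τ₀) = 0) :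
    ∃ δ : ℝ → EuclideanSpace ℝ (Fin n),
      ContDiffOn ℝ 1 δ I ∧
      ∀ τ ∈ I, g (δ τ, τ) = 0 ∧
        ∀ x : EuclideanSpace ℝ (Fin n), g (x, τ) = 0 → x = δ τ := by
  have hopen : IsOpen ((univ : Set (EuclideanSpace ℝ (Fin n))) ×ˢ I) := isOpen_univ.prod hIopen
  have hgat : ∀ x, ∀ τ ∈ I, ContDiffAt ℝ 1 g (x, τ) := fun x τ hτ =>
    hg.contDiffAt (hopen.mem_nhds ⟨mem_univ _, hτ⟩)
  have hslice : ∀ x, ∀ τ ∈ I, DifferentiableAt ℝ (fun x' => g (x', τ)) x := by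
    intro x τ hτ
    have h1 := (hgat x τ hτ).differentiableAt one_ne_zero
    exact DifferentiableAt.fun_comp' x h1 (by fun_prop)
  -- uniqueness of zeros
  have huniq : ∀ τ ∈ I, ∀ x y, g (x, τ) = 0 → g (y, τ) = 0 → x = y := by
    intro τ hτ x y hx hy
    by_contra hne
    have hu : y - x ≠ 0 := sub_ne_zero.2 (Ne.symm hne)
    have hd : ∀ t : ℝ, HasDerivAt (fun t : ℝ => ⟪g (x + t • (y - x), τ), y - x⟫)
        ⟪fderiv ℝ (fun x' => g (x', τ)) (x + t • (y - x)) (y - x), y - x⟫ t := by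
      intro t
      have h1 : HasDerivAt (fun t : ℝ => x + t • (y - x)) (y - x) t := by
        simpa using ((hasDerivAt_id t).smul_const (y - x)).const_add x
      have h2 := (hslice (x + t • (y - x)) τ hτ).hasFDerivAt.comp_hasDerivAt t h1
      simpa using h2.inner ℝ (hasDerivAt_const t (y - x))
    have hmono : StrictMono (fun t : ℝ => ⟪g (x + t • (y - x), τ), y - x⟫) := by
      refine strictMono_of_deriv_pos fun t => ?_
      rw [(hd t).deriv]
      exact hpos _ τ hτ _ hu
    have := hmono (zero_lt_one : (0 : ℝ) < 1)
    simp [hx, hy] at this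
  -- local solution
  have hloc : ∀ x, ∀ τ ∈ I, g (x, τ) = 0 → ∃ ψ : ℝ → EuclideanSpace ℝ (Fin n),
      ContDiffAt ℝ 1 ψ τ ∧ ∀ᶠ σ in nhds τ, g (ψ σ, σ) = 0 := by
    intro x τ hτ hx
    have cdf : ContDiffAt ℝ 1 (fun p : ℝ × EuclideanSpace ℝ (Fin n) => g (p.2, p.1)) (τ, x) :=
      ContDiffAt.comp (τ, x) (g := g) (hgat x τ hτ) (contDiffAt_snd.prodMk contDiffAt_fst)
    have hEq : (fderiv ℝ (fun p : ℝ × EuclideanSpace ℝ (Fin n) => g (p.2, p.1)) (τ, x)) ∘L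
        (ContinuousLinearMap.inr ℝ ℝ (EuclideanSpace ℝ (Fin n))) =
        fderiv ℝ (fun x' => g (x', τ)) x := by
      have h1 := (cdf.differentiableAt one_ne_zero).hasFDerivAt
      have h2 := HasFDerivAt.comp x h1 (hasFDerivAt_prodMk_right τ x)
      exact h2.fderiv.symm
    have hinv : ((fderiv ℝ (fun p : ℝ × EuclideanSpace ℝ (Fin n) => g (p.2, p.1)) (τ, x)) ∘L
        (ContinuousLinearMap.inr ℝ ℝ (EuclideanSpace ℝ (Fin n)))).IsInvertible := by
      rw [hEq]
      set A := fderiv ℝ (fun x' => g (x', τ)) x with hA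
      have hinj : Function.Injective (A : EuclideanSpace ℝ (Fin n) →ₗ[ℝ] EuclideanSpace ℝ (Fin n)) := by
        rw [injective_iff_map_eq_zero]
        intro u hu
        by_contra hne
        have h3 := hpos x τ hτ u hne
        rw [← hA] at h3
        have hu' : A u = 0 := hu
        simp [hu'] at h3
      exact ⟨(LinearEquiv.ofInjectiveEndo _ hinj).toContinuousLinearEquiv, by ext; rfl⟩
    refine ⟨cdf.implicitFunction one_ne_zero hinv,
      cdf.contDiffAt_implicitFunction one_ne_zero hinv, ?_⟩
    filter_upwards [cdf.eventually_apply_implicitFunction one_ne_zero hinv] with σ hσ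
    exact hσ.trans hx
  -- global existence
  have hex : I ⊆ {τ | τ ∈ I ∧ ∃ x, g (x, τ) = 0} := by
    refine IsPreconnected.subset_of_closure_inter_subset hIconn.isPreconnected ?_ ?_ ?_
    · rw [isOpen_iff_mem_nhds]
      rintro τ ⟨hτ, x, hx⟩
      obtain ⟨ψ, -, hψ⟩ := hloc x τ hτ hx
      filter_upwards [hψ, hIopen.mem_nhds hτ] with σ h1 h2
      exact ⟨h2, _, h1⟩
    · obtain ⟨x, τ, hτ, hx⟩ := hzero
      exact ⟨τ, hτ, hτ, x, hx⟩
    · rintro τ ⟨hcl, hτ⟩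
      refine ⟨hτ, ?_⟩
      obtain ⟨ε, hε, hball⟩ := Metric.nhds_basis_closedBall.mem_iff.1 (hIopen.mem_nhds hτ)
      rw [Real.closedBall_eq_Icc] at hball
      obtain ⟨R, hR⟩ := (hbdd _ _ hball).subset_closedBall 0
      set C := Metric.closedBall (0 : EuclideanSpace ℝ (Fin n)) R ×ˢ Icc (τ - ε) (τ + ε) with hC
      have hCc : IsCompact C := (isCompact_closedBall _ _).prod isCompact_Icc
      have hgC : ContinuousOn g C := hg.continuousOn.mono (prod_mono (subset_univ _) hball)
      have hK : IsCompact (C ∩ g ⁻¹' {0}) :=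
        hCc.of_isClosed_subset (hgC.preimage_isClosed_of_isClosed hCc.isClosed isClosed_singleton)
          inter_subset_left
      have hZ : IsClosed (Prod.snd '' (C ∩ g ⁻¹' {0})) := (hK.image continuous_snd).isClosed
      have hmem : τ ∈ closure (Prod.snd '' (C ∩ g ⁻¹' {0})) := by
        rw [mem_closure_iff_nhds] at hcl ⊢
        intro t ht
        obtain ⟨σ, ⟨h1, h2⟩, h3, x, hx⟩ := hcl (t ∩ Icc (τ - ε) (τ + ε))
          (Filter.inter_mem ht (Icc_mem_nhds (by linarith) (by linarith)))
        exact ⟨σ, h1, (x, σ), ⟨⟨hR ⟨σ, h2, hx⟩, h2⟩, hx⟩, rfl⟩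
      rw [hZ.closure_eq] at hmem
      obtain ⟨⟨x, σ⟩, ⟨-, h2⟩, rfl⟩ := hmem
      exact ⟨x, h2⟩
  have hex' : ∀ τ, ∃ x, τ ∈ I → g (x, τ) = 0 := by
    intro τ
    by_cases hτ : τ ∈ I
    · obtain ⟨-, x, hx⟩ := hex hτ
      exact ⟨x, fun _ => hx⟩
    · exact ⟨0, fun h => absurd h hτ⟩
  choose δ hδ using hex'
  refine ⟨δ, ?_, fun τ hτ => ⟨hδ τ hτ, fun x hx => huniq τ hτ _ _ hx (hδ τ hτ)⟩⟩
  intro τ hτ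
  obtain ⟨ψ, hψ, hψ0⟩ := hloc _ τ hτ (hδ τ hτ)
  refine (hψ.congr_of_eventuallyEq ?_).contDiffWithinAt
  filter_upwards [hψ0, hIopen.mem_nhds hτ] with σ h1 h2
  exact huniq σ h2 _ _ (hδ σ h2) h1
end

section
/- Let I ⊆ ℝ be an interval, n ≥ 1, v ∈ ℝⁿ with v ≠ 0, and let δ : I → ℝⁿ be differentiable such that for each τ ∈ I there is a linear map A(τ) : ℝⁿ → ℝⁿ satisfying ⟨A(τ)u, u⟩ > 0 for all u ≠ 0 and δ′(τ) = A(τ)⁻¹ v. Then δ is injective on I. -/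
open scoped RealInnerProductSpace
open Set

/-- If the derivative of `δ : I → ℝⁿ` is everywhere of the form `A(τ)⁻¹ v` for a
fixed nonzero vector `v` and positive definite linear maps `A(τ)`, then `δ` is
injective on the interval `I`. -/
theorem stmt_11 (n : ℕ) (hn : 1 ≤ n)
    (I : Set ℝ) (hIconn : I.OrdConnected)
    (v : EuclideanSpace ℝ (Fin n)) (hv : v ≠ 0)
    (δ δ' : ℝ → EuclideanSpace ℝ (Fin n))
    (hδ : ∀ τ ∈ I, HasDerivAt δ (δ' τ) τ)
    (hA : ∀ τ ∈ I, ∃ A : EuclideanSpace ℝ (Fin n) →L[ℝ] EuclideanSpace ℝ (Fin n),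
      (∀ u : EuclideanSpace ℝ (Fin n), u ≠ 0 → 0 < ⟪A u, u⟫) ∧ A (δ' τ) = v) :
    Set.InjOn δ I := by
  have hpos : ∀ τ ∈ I, 0 < ⟪v, δ' τ⟫ := by
    intro τ hτ
    obtain ⟨A, hA1, hA2⟩ := hA τ hτ
    have hne : δ' τ ≠ 0 := by
      intro h
      apply hv
      rw [← hA2, h, map_zero]
    have := hA1 _ hne
    rwa [hA2] at this
  have hder : ∀ τ ∈ I, HasDerivAt (fun t => ⟪v, δ t⟫) ⟪v, δ' τ⟫ τ := by
    intro τ hτ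
    simpa using (hasDerivAt_const τ v).inner ℝ (hδ τ hτ)
  have hmono : StrictMonoOn (fun t => ⟪v, δ t⟫) I := by
    apply strictMonoOn_of_deriv_pos hIconn.convex
    · exact fun τ hτ => (hder τ hτ).continuousAt.continuousWithinAt
    · intro τ hτ
      rw [(hder τ (interior_subset hτ)).deriv]
      exact hpos τ (interior_subset hτ)
  intro a ha b hb hab
  apply hmono.injOn ha hb
  simp only [hab]
end
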